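/- Let n ≥ 2 and let E ⊂ ℝⁿ be a nonempty regular compact set such that its covariogram g_E is radially symmetric, i.e. g_E(x) = g_E(y) whenever |x| = |y|. Then: (a) there exists x₀ ∈ ℝⁿ such that ρ(E − x₀) = E − x₀ for every linear isometry ρ of ℝⁿ; and (b) for every regular compact set F ⊂ ℝⁿ with g_F(x) = g_E(x) for all x ∈ ℝⁿ, there exists x ∈ ℝⁿ such that F = E + x or F = (−E) + x. -/

import Mathlib

/-! Let `M E ξ = ∫ x in E, exp ⟪ξ, x⟫` be the Laplace transform of a compact set `E`. The product
`M E ξ * M E (-ξ)` is the Laplace transform of the law of the difference of two points of `E`,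
whose density is the covariogram (`diffMeasure_eq_withDensity`, `laplaceTransform_mul_neg`). If
the covariogram is radial, this product is invariant under the complexified orthogonal group, and
the point is to show that `M E` is even once the centroid of `E` has been moved to the origin
(`laplaceTransform_even`). Granting this, `M E ξ ^ 2` is the transform of the covariogram, so `M E
≥ 0` is determined by the covariogram, and `M E` determines a regular compact set
(`eq_of_covariogram_eq`). Applied to the centred set `E₀` and to `ρ '' E₀`, which has the same
radial covariogram, this gives the symmetry; applied to the centred copies of `E` and `F`, it
shows that `F` is a translate of `E`.

Evenness is a statement in the plane (`plane_even`). In null coordinates on the complexified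
frequency plane the transform is an entire function `Φ (u, v)` of exponential type, and complex
rotations act by `(u, v) ↦ (l * u, l⁻¹ * v)`, with orbits `u * v = c`. On an orbit where the
invariant product is nonzero, `φ l = Φ (l, c / l)` satisfies `φ l * φ (-l) = const`, so it has no
zeros and `|log |φ||` is at most linear in `|l| + 1 / |l|`; by Borel–Carathéodory and Cauchy's
estimates `l * φ' l / φ l = a * l + b / l` with `|a|` bounded independently of `c`
(`logDeriv_eq_of_mul_neg_eq`). Thus `a = a c` is holomorphic and bounded off the zeros of an
entire function, hence constant by Liouville (`eq_of_bounded_off_zeros`), and its value at `c = 0`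
is read off from the centroid, so `a = 0`. On an orbit `c = r ^ 2` with `r > 0`, the points with
`|l| = r` are real frequencies, where `Φ` is real, and this forces `b = 0`. So `Φ` is constant on
that orbit, which contains both `(r, r)` and `(-r, -r)`. -/

open MeasureTheory Pointwise

/-- The covariogram of a compact set `E`: `g_E(x) = λ_n(E ∩ (E + x))`. -/
noncomputable def covariogram {n : ℕ} (E : Set (EuclideanSpace ℝ (Fin n)))
    (x : EuclideanSpace ℝ (Fin n)) : ℝ :=
  (volume (E ∩ ((· + x) '' E))).toReal

/-! ### Functions on the punctured complex plane -/

section ComplexAnalysis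
open Complex Metric Set Filter Topology

/-- A zero-free holomorphic function on a disc that exceeds its value at the centre by a factor of
at most `exp A` has logarithmic derivative at most `4 * A / ρ` there: apply the Borel–Carathéodory
inequality to a branch of `log (φ / φ z)`, and then Cauchy's estimate. -/
theorem norm_logDeriv_le {φ : ℂ → ℂ} {z : ℂ} {ρ A : ℝ} (hρ : 0 < ρ) (hA : 0 < A)
    (hd : DifferentiableOn ℂ φ (ball z ρ)) (h0 : ∀ w ∈ ball z ρ, φ w ≠ 0)
    (hb : ∀ w ∈ ball z ρ, ‖φ w‖ ≤ ‖φ z‖ * Real.exp A) :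
    ‖deriv φ z / φ z‖ ≤ 4 * A / ρ := by
  have hq : DifferentiableOn ℂ (fun w => deriv φ w / φ w) (ball z ρ) :=
    (hd.deriv isOpen_ball).div hd h0
  -- `g` is the branch of `log (φ / φ z)` vanishing at `z`
  obtain ⟨g, hg0, hg⟩ := hq.isExactOn_ball.with_val_at z 0
  have hz : z ∈ ball z ρ := mem_ball_self hρ
  have hexp : ∀ w ∈ ball z ρ, φ w = φ z * exp (g w) := by
    have hk : ∀ w ∈ ball z ρ, HasDerivAt (fun w => φ w * exp (-g w)) 0 w := by
      intro w hw
      have h1 := (hd.differentiableAt (isOpen_ball.mem_nhds hw)).hasDerivAt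
      have h2 := h1.mul (hg w hw).neg.cexp
      refine h2.congr_deriv ?_
      have := h0 w hw
      simp only [Pi.neg_apply]
      field_simp
      ring
    intro w hw
    have := isOpen_ball.is_const_of_deriv_eq_zero (convex_ball z ρ).isPreconnected
      (fun w hw => (hk w hw).differentiableAt.differentiableWithinAt)
      (fun w hw => (hk w hw).deriv) hw hz
    simp only [hg0, neg_zero, exp_zero, mul_one] at this
    rw [← this, mul_assoc, ← exp_add]
    simp
  have hre : ∀ w ∈ ball z ρ, (g w).re ≤ A := by
    intro w hw
    have h1 := hb w hw
    rw [hexp w hw, norm_mul, norm_exp] at h1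
    exact Real.exp_le_exp.1 (le_of_mul_le_mul_left h1 (norm_pos_iff.2 (h0 z hz)))
  have hshift : ∀ w ∈ ball (0 : ℂ) ρ, z + w ∈ ball z ρ := by
    intro w hw; simpa [mem_ball, dist_eq] using hw
  have hgd : DifferentiableOn ℂ (fun w => g (z + w)) (ball 0 ρ) := by
    intro w hw
    exact ((hg _ (hshift w hw)).comp_const_add z w).differentiableAt.differentiableWithinAt
  have hBC : ∀ w ∈ sphere z (ρ / 2), ‖g w‖ ≤ 2 * A := by
    intro w hw
    have hn : ‖w - z‖ = ρ / 2 := by simpa [dist_eq] using hw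
    have hw' : w - z ∈ ball (0 : ℂ) ρ := by simp [hn, hρ]
    have := borelCaratheodory_zero hA hgd (fun x hx => hre _ (hshift x hx)) hρ hw' (by simp [hg0])
    simp only [add_sub_cancel, hn] at this
    refine this.trans (le_of_eq ?_)
    have : ρ - ρ / 2 = ρ / 2 := by ring
    rw [this]; field_simp
  have hsub : closedBall z (ρ / 2) ⊆ ball z ρ := closedBall_subset_ball (by linarith)
  have hcl : DiffContOnCl ℂ g (ball z (ρ / 2)) := by
    apply DifferentiableOn.diffContOnCl
    rw [closure_ball z (by positivity)]
    exact fun w hw => (hg w (hsub hw)).differentiableAt.differentiableWithinAt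
  have := norm_deriv_le_of_forall_mem_sphere_norm_le (by positivity) hcl hBC
  rw [(hg z hz).deriv] at this
  refine this.trans (le_of_eq ?_)
  field_simp; norm_num

/-- A holomorphic function on the punctured plane with quadratic growth at infinity, bounded near
the origin, is a quadratic polynomial, whose leading coefficient is controlled by the growth
constant alone. -/
theorem eq_quadratic_of_norm_le {Q : ℂ → ℂ} {K₂ K₁ K₀ : ℝ}
    (hd : DifferentiableOn ℂ Q {0}ᶜ)
    (hb : ∀ w ≠ 0, ‖Q w‖ ≤ K₂ * ‖w‖ ^ 2 + K₁ * ‖w‖ + K₀) :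
    ∃ a b c : ℂ, ‖a‖ ≤ K₂ ∧ ∀ w ≠ 0, Q w = a * w ^ 2 + b * w + c := by
  set T := Function.update Q 0 (limUnder (𝓝[≠] 0) Q) with hT
  have hTQ : ∀ w ≠ 0, T w = Q w := fun w hw => Function.update_of_ne hw _ _
  have hTd : Differentiable ℂ T := by
    intro w
    rcases eq_or_ne w 0 with rfl | hw
    · refine (differentiableOn_update_limUnder_of_bddAbove (s := ball 0 1) (c := 0)
        (ball_mem_nhds _ one_pos) (hd.mono fun x hx => hx.2) ?_).differentiableAt
        (ball_mem_nhds _ one_pos)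
      refine ⟨|K₂| + |K₁| + K₀, ?_⟩
      rintro _ ⟨w, ⟨hw, hw0⟩, rfl⟩
      have hw1 : ‖w‖ ≤ 1 := by simpa using (mem_ball.1 hw).le
      refine (hb w hw0).trans ?_
      have h1 : K₂ * ‖w‖ ^ 2 ≤ |K₂| * 1 :=
        mul_le_mul (le_abs_self _) (pow_le_one₀ (norm_nonneg _) hw1) (by positivity) (abs_nonneg _)
      have h2 : K₁ * ‖w‖ ≤ |K₁| * 1 :=
        mul_le_mul (le_abs_self _) hw1 (by positivity) (abs_nonneg _)
      linarith
    · have h1 : DifferentiableAt ℂ Q w := hd.differentiableAt (isOpen_ne.mem_nhds hw)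
      refine h1.congr_of_eventuallyEq ?_
      filter_upwards [isOpen_ne.mem_nhds hw] with x hx using hTQ x hx
  -- Cauchy's estimates on large circles
  have hC : ∀ n : ℕ, ∀ r : ℝ, 0 < r →
      ‖iteratedDeriv n T 0‖ ≤ n.factorial * (K₂ * r ^ 2 + K₁ * r + K₀) / r ^ n := by
    intro n r hr
    refine norm_iteratedDeriv_le_of_forall_mem_sphere_norm_le n hr hTd.diffContOnCl ?_
    intro w hw
    have hn : ‖w‖ = r := by simpa using hw
    have h0 : w ≠ 0 := by rintro rfl; simp at hn; linarith
    rw [hTQ w h0, ← hn]; exact hb w h0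
  have hlim : ∀ n : ℕ, 2 ≤ n → Tendsto (fun r : ℝ =>
      (n.factorial : ℝ) * (K₂ * r ^ 2 + K₁ * r + K₀) / r ^ n) atTop
      (𝓝 (n.factorial * (if n = 2 then K₂ else 0))) := by
    intro n hn
    obtain ⟨m, rfl⟩ := Nat.exists_eq_add_of_le hn
    have hi := tendsto_inv_atTop_zero (𝕜 := ℝ)
    have h1 : Tendsto (fun r : ℝ => ((2 + m).factorial : ℝ) *
        ((K₂ + K₁ * r⁻¹ + K₀ * (r⁻¹) ^ 2) * (r⁻¹) ^ m)) atTop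
        (𝓝 ((2 + m).factorial * ((K₂ + K₁ * 0 + K₀ * 0 ^ 2) * 0 ^ m))) :=
      (((hi.const_mul K₁).const_add K₂ |>.add ((hi.pow 2).const_mul K₀)).mul (hi.pow m)).const_mul _
    have h2 : (K₂ + K₁ * 0 + K₀ * 0 ^ 2) * 0 ^ m = if 2 + m = 2 then K₂ else 0 := by
      rcases m with _ | m <;> simp
    rw [h2] at h1
    refine h1.congr' ?_
    filter_upwards [eventually_gt_atTop 0] with r hr
    simp only [inv_pow, pow_add]
    field_simp
  have hnb : ∀ n : ℕ, 2 ≤ n → ‖iteratedDeriv n T 0‖ ≤ n.factorial * (if n = 2 then K₂ else 0) := by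
    intro n hn
    refine ge_of_tendsto (hlim n hn) ?_
    filter_upwards [eventually_gt_atTop 0] with r hr using hC n r hr
  have h3 : ∀ n : ℕ, 3 ≤ n → iteratedDeriv n T 0 = 0 := by
    intro n hn
    have := hnb n (by omega)
    rw [if_neg (by omega), mul_zero] at this
    exact norm_le_zero_iff.1 this
  refine ⟨iteratedDeriv 2 T 0 / 2, iteratedDeriv 1 T 0, iteratedDeriv 0 T 0, ?_, ?_⟩
  · have := hnb 2 le_rfl
    simp only [if_true, Nat.factorial] at this
    rw [norm_div]; norm_num at this ⊢
    linarith
  · intro w hw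
    have hs := hasSum_taylorSeries_of_entire hTd 0 w
    have hf := hasSum_sum_of_ne_finset_zero (L := SummationFilter.unconditional ℕ)
      (f := fun n : ℕ => (n.factorial : ℂ)⁻¹ • (w - 0) ^ n • iteratedDeriv n T 0)
      (s := Finset.range 3) (by
        intro n hn
        rw [h3 n (by simpa using hn)]; simp)
    rw [← hTQ w hw, hs.unique hf]
    simp [Finset.sum_range_succ, Nat.factorial]
    ring

/-- Liouville's theorem for a function that is holomorphic and bounded off the zero set of an
entire function `h`: the zeros are isolated, so the singularities are removable. -/
theorem eq_of_bounded_off_zeros {h A : ℂ → ℂ} {K : ℝ} (hh : Differentiable ℂ h) (h0 : h 0 ≠ 0)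
    (hd : ∀ c, h c ≠ 0 → DifferentiableAt ℂ A c) (hb : ∀ c, h c ≠ 0 → ‖A c‖ ≤ K) :
    ∀ c, h c ≠ 0 → A c = A 0 := by
  have hiso : ∀ c, ∀ᶠ w in 𝓝[≠] c, h w ≠ 0 := by
    intro c
    have han : AnalyticOnNhd ℂ h univ := analyticOnNhd_univ_iff_differentiable.2 hh
    refine ((han c (mem_univ c)).eventually_eq_zero_or_eventually_ne_zero).resolve_left ?_
    intro hz
    exact h0 (han.eqOn_zero_of_preconnected_of_eventuallyEq_zero isPreconnected_univ (mem_univ c) hz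
      (mem_univ 0))
  set T : ℂ → ℂ := fun c => limUnder (𝓝[≠] c) A with hT
  have hTA : ∀ c, h c ≠ 0 → T c = A c := fun c hc =>
    ((hd c hc).continuousAt.tendsto.mono_left nhdsWithin_le_nhds).limUnder_eq
  have hTd : Differentiable ℂ T := by
    intro c
    obtain ⟨r, hr, hball⟩ := Metric.mem_nhdsWithin_iff.1 (hiso c)
    have hU := differentiableOn_update_limUnder_of_bddAbove (s := ball c r) (c := c) (f := A)
      (ball_mem_nhds _ hr)
      (fun w hw => (hd w (hball hw)).differentiableWithinAt)
      ⟨K, by rintro _ ⟨w, hw, rfl⟩; exact hb w (hball hw)⟩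
    refine (hU.differentiableAt (ball_mem_nhds _ hr)).congr_of_eventuallyEq ?_
    filter_upwards [ball_mem_nhds c hr] with w hw
    rcases eq_or_ne w c with rfl | hwc
    · simp [hT]
    · rw [Function.update_of_ne hwc]; exact hTA w (hball ⟨hw, hwc⟩)
  have hTb : ∀ c, ‖T c‖ ≤ K := by
    intro c
    have h1 : Tendsto (fun w => ‖T w‖) (𝓝[≠] c) (𝓝 ‖T c‖) :=
      (hTd c).continuousAt.norm.tendsto.mono_left nhdsWithin_le_nhds
    refine le_of_tendsto h1 ?_
    filter_upwards [hiso c] with w hw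
    rw [hTA w hw]; exact hb w hw
  intro c hc
  rw [← hTA c hc, ← hTA 0 h0]
  refine hTd.apply_eq_apply_of_bounded ?_ c 0
  rw [isBounded_iff_forall_norm_le]
  exact ⟨K, by rintro _ ⟨w, rfl⟩; exact hTb w⟩

/-- A function on the punctured plane, of exponential type at `0` and `∞`, with `φ w * φ (-w)` a
nonzero constant has a logarithmic derivative of the form `a + b / w ^ 2`. The relation makes `φ`
zero-free and turns the upper bound at `-w` into a lower bound at `w`, so `w ^ 2 * φ' w / φ w` has
quadratic growth; it also makes the logarithmic derivative even, which excludes a term in `w⁻¹`.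
The bound on `a` depends neither on `h` nor on `M` and `S`. -/
theorem logDeriv_eq_of_mul_neg_eq {φ : ℂ → ℂ} {h : ℂ} {M R S : ℝ}
    (hd : DifferentiableOn ℂ φ {0}ᶜ) (hM : 0 < M) (hR : 0 ≤ R) (hS : 0 ≤ S) (h0 : h ≠ 0)
    (hb : ∀ w ≠ 0, ‖φ w‖ ≤ M * Real.exp (R * (‖w‖ + ‖w‖⁻¹ * S)))
    (hprod : ∀ w ≠ 0, φ w * φ (-w) = h) :
    ∃ a b : ℂ, ‖a‖ ≤ 24 * R ∧ ∀ w ≠ 0, w * deriv φ w / φ w = a * w + b / w := by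
  have hne : ∀ w ≠ 0, φ w ≠ 0 := fun w hw hz => h0 (by rw [← hprod w hw, hz, zero_mul])
  have hda : ∀ w ≠ 0, DifferentiableAt ℂ φ w := fun w hw =>
    hd.differentiableAt (isOpen_ne.mem_nhds hw)
  have hhn : 0 < ‖h‖ := norm_pos_iff.2 h0
  set L : ℝ := |Real.log (M ^ 2 / ‖h‖)| + 1 with hL
  have hLpos : 0 < L := by positivity
  have hlog : ∀ w ≠ 0, ‖deriv φ w / φ w‖ ≤
      4 * (2 * (R * (3 / 2 * ‖w‖ + 2 * ‖w‖⁻¹ * S)) + L) / (‖w‖ / 2) := by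
    intro w hw
    have hwn : 0 < ‖w‖ := norm_pos_iff.2 hw
    set X := R * (3 / 2 * ‖w‖ + 2 * ‖w‖⁻¹ * S) with hX
    have hX0 : 0 ≤ X := by positivity
    have hbX : ∀ x ∈ ball w (‖w‖ / 2), x ≠ 0 ∧ ‖φ x‖ ≤ M * Real.exp X := by
      intro x hx
      rw [mem_ball, dist_eq_norm] at hx
      have h1 : ‖x‖ ≤ 3 / 2 * ‖w‖ := by have := norm_sub_norm_le x w; linarith
      have h2 : ‖w‖ / 2 < ‖x‖ := by
        have := norm_sub_norm_le w x; rw [norm_sub_rev] at this; linarith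
      have hx0 : x ≠ 0 := by rintro rfl; simp at h2; linarith
      refine ⟨hx0, (hb x hx0).trans ?_⟩
      have h3 : ‖x‖⁻¹ ≤ 2 * ‖w‖⁻¹ := by
        have := inv_anti₀ (by positivity) h2.le
        rwa [inv_div, div_eq_mul_inv] at this
      have h4 : R * (‖x‖ + ‖x‖⁻¹ * S) ≤ X := by rw [hX]; gcongr
      gcongr
    have hself : w ∈ ball w (‖w‖ / 2) := mem_ball_self (by positivity)
    refine norm_logDeriv_le (by positivity) (by positivity)
      (fun x hx => (hda x (hbX x hx).1).differentiableWithinAt) (fun x hx => hne x (hbX x hx).1) ?_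
    intro x hx
    have hneg : ‖φ (-w)‖ ≤ M * Real.exp X := by
      refine (hb (-w) (neg_ne_zero.2 hw)).trans ?_
      rw [norm_neg]
      have : 0 ≤ ‖w‖⁻¹ * S := by positivity
      refine mul_le_mul_of_nonneg_left (Real.exp_le_exp.2 (mul_le_mul_of_nonneg_left ?_ hR)) hM.le
      nlinarith
    have hlow : ‖h‖ ≤ ‖φ w‖ * (M * Real.exp X) := by
      rw [← hprod w hw, norm_mul]
      exact mul_le_mul_of_nonneg_left hneg (norm_nonneg _)
    have hexpL : M ^ 2 / ‖h‖ ≤ Real.exp L := by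
      calc M ^ 2 / ‖h‖ = Real.exp (Real.log (M ^ 2 / ‖h‖)) := (Real.exp_log (by positivity)).symm
        _ ≤ Real.exp L := Real.exp_le_exp.2 (by
            rw [hL]; linarith [le_abs_self (Real.log (M ^ 2 / ‖h‖))])
    have hE : 0 < Real.exp X := Real.exp_pos X
    calc ‖φ x‖ ≤ M * Real.exp X := (hbX x hx).2
      _ = ‖h‖ * (M * Real.exp X / ‖h‖) := by field_simp
      _ ≤ ‖φ w‖ * (M * Real.exp X) * (M * Real.exp X / ‖h‖) := by gcongr
      _ = ‖φ w‖ * (Real.exp X * Real.exp X * (M ^ 2 / ‖h‖)) := by ring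
      _ ≤ ‖φ w‖ * (Real.exp X * Real.exp X * Real.exp L) := by gcongr
      _ = ‖φ w‖ * Real.exp (2 * X + L) := by
          rw [two_mul, Real.exp_add (X + X), Real.exp_add X]
  have hderiv : DifferentiableOn ℂ (deriv φ) {0}ᶜ := hd.deriv isOpen_compl_singleton
  obtain ⟨a, k, b, ha, hq⟩ := eq_quadratic_of_norm_le (Q := fun w => w ^ 2 * (deriv φ w / φ w))
    (K₂ := 24 * R) (K₁ := 8 * L) (K₀ := 32 * R * S)
    ((differentiableOn_id.pow 2).mul (hderiv.div hd hne)) (by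
      intro w hw
      have hwn : 0 < ‖w‖ := norm_pos_iff.2 hw
      rw [norm_mul, norm_pow]
      refine (mul_le_mul_of_nonneg_left (hlog w hw) (by positivity)).trans (le_of_eq ?_)
      field_simp
      ring)
  refine ⟨a, b, ha, ?_⟩
  -- the logarithmic derivative is even because `φ w * φ (-w)` is constant
  have heven : ∀ w ≠ 0, deriv φ (-w) / φ (-w) = deriv φ w / φ w := by
    intro w hw
    have hw' : -w ≠ 0 := neg_ne_zero.2 hw
    have h1 : HasDerivAt (fun x => φ x * φ (-x))
        (deriv φ w * φ (-w) + φ w * (-deriv φ (-w))) w := by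
      refine (hda w hw).hasDerivAt.mul ?_
      have := (hda (-w) hw').hasDerivAt.scomp w (hasDerivAt_neg w)
      simpa [Function.comp_def] using this
    have h2 : HasDerivAt (fun x => φ x * φ (-x)) 0 w :=
      (hasDerivAt_const w h).congr_of_eventuallyEq (by
        filter_upwards [isOpen_ne.mem_nhds hw] with x hx using hprod x hx)
    have h3 := h1.unique h2
    rw [div_eq_div_iff (hne _ hw') (hne _ hw)]
    linear_combination -h3
  have hk : k = 0 := by
    have h1 := hq 1 one_ne_zero
    have h2 := hq (-1) (by simp)
    simp only [heven 1 one_ne_zero] at h2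
    linear_combination (h2 - h1) / 2
  intro w hw
  have := hq w hw
  simp only [hk, zero_mul, add_zero] at this
  have h' := hne w hw
  field_simp
  field_simp at this
  linear_combination this

theorem frequently_norm_eq_one : ∃ᶠ w in 𝓝[≠] (1 : ℂ), ‖w‖ = 1 := by
  have hpre : IsPreconnected (sphere (0 : ℂ) 1) :=
    isPreconnected_sphere (by rw [Complex.rank_real_complex]; norm_num) 0 1
  have := hpre.preperfect_of_nontrivial ⟨1, by simp, -1, by simp, by norm_num⟩ 1 (by simp)
  rw [accPt_iff_frequently_nhdsNE] at this
  exact this.mono fun w hw => by simpa using hw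

end ComplexAnalysis

/-! ### Laplace transforms of measures in the plane -/

section Plane
open Complex Metric Set Filter Topology ComplexConjugate

/-- The two-sided Laplace transform of the weighted measure `w • μ` on the plane `ℝ² = ℂ`,
extended to complex frequencies. The complexified frequency space is given the null coordinates `p
= (u, v)`, for which the pairing with `z` is `u * z + v * conj z`; real frequencies are the points
with `v = conj u`, and a complex rotation acts by `(u, v) ↦ (l * u, l⁻¹ * v)`. -/
noncomputable def planeTransform (μ : Measure ℂ) (w : ℂ → ℂ) (p : ℂ × ℂ) : ℂ :=
  ∫ z, w z * exp (p.1 * z + p.2 * conj z) ∂μ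

variable {μ : Measure ℂ} {R : ℝ}

theorem norm_exp_plane_le {z : ℂ} (hz : ‖z‖ ≤ R) (p : ℂ × ℂ) :
    ‖exp (p.1 * z + p.2 * conj z)‖ ≤ Real.exp (R * (‖p.1‖ + ‖p.2‖)) := by
  rw [norm_exp]
  refine Real.exp_le_exp.2 ((re_le_norm _).trans ((norm_add_le _ _).trans ?_))
  rw [norm_mul, norm_mul, norm_conj]
  nlinarith [mul_le_mul_of_nonneg_left hz (norm_nonneg p.1),
    mul_le_mul_of_nonneg_left hz (norm_nonneg p.2)]

theorem exists_weight_bound (hR : ∀ᵐ z ∂μ, ‖z‖ ≤ R) {w : ℂ → ℂ} (hw : Continuous w) :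
    ∃ W, 0 ≤ W ∧ ∀ᵐ z ∂μ, ‖w z‖ ≤ W := by
  obtain ⟨W, hW⟩ := (isCompact_closedBall (0 : ℂ) R).exists_bound_of_continuousOn hw.continuousOn
  refine ⟨max W 0, le_max_right _ _, ?_⟩
  filter_upwards [hR] with z hz
  exact (hW z (by simpa using hz)).trans (le_max_left _ _)

theorem conj_planeTransform (w : ℂ → ℂ) (p : ℂ × ℂ) :
    conj (planeTransform μ w p) = planeTransform μ (fun z => conj (w z)) (conj p.2, conj p.1) := by
  simp only [planeTransform]
  rw [← integral_conj]
  refine integral_congr_ae (Eventually.of_forall fun z => ?_)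
  simp only [map_mul, ← exp_conj, map_add, conj_conj]
  rw [add_comm]

variable [IsFiniteMeasure μ]

theorem integrable_plane (hR : ∀ᵐ z ∂μ, ‖z‖ ≤ R) {w : ℂ → ℂ} (hw : Continuous w) (p : ℂ × ℂ) :
    Integrable (fun z => w z * exp (p.1 * z + p.2 * conj z)) μ := by
  obtain ⟨W, hW0, hW⟩ := exists_weight_bound hR hw
  refine Integrable.of_bound (C := W * Real.exp (R * (‖p.1‖ + ‖p.2‖)))
    (by fun_prop) ?_
  filter_upwards [hR, hW] with z hz hwz
  rw [norm_mul]
  exact mul_le_mul hwz (norm_exp_plane_le hz p) (norm_nonneg _) hW0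

theorem hasFDerivAt_planeTransform (hR : ∀ᵐ z ∂μ, ‖z‖ ≤ R) {w : ℂ → ℂ} (hw : Continuous w)
    (p : ℂ × ℂ) :
    HasFDerivAt (planeTransform μ w)
      (planeTransform μ (fun z => w z * z) p • ContinuousLinearMap.fst ℂ ℂ ℂ +
        planeTransform μ (fun z => w z * conj z) p • ContinuousLinearMap.snd ℂ ℂ ℂ) p := by
  have hc : Continuous (fun z : ℂ => conj z) := continuous_conj
  set F' : ℂ × ℂ → ℂ → (ℂ × ℂ →L[ℂ] ℂ) := fun q z =>
    (w z * z * exp (q.1 * z + q.2 * conj z)) • ContinuousLinearMap.fst ℂ ℂ ℂ +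
      (w z * conj z * exp (q.1 * z + q.2 * conj z)) • ContinuousLinearMap.snd ℂ ℂ ℂ with hF'
  have hi1 : Integrable (fun z => (w z * z * exp (p.1 * z + p.2 * conj z)) •
      ContinuousLinearMap.fst ℂ ℂ ℂ) μ :=
    (integrable_plane hR (hw.mul continuous_id) p).smul_const _
  have hi2 : Integrable (fun z => (w z * conj z * exp (p.1 * z + p.2 * conj z)) •
      ContinuousLinearMap.snd ℂ ℂ ℂ) μ :=
    (integrable_plane hR (hw.mul hc) p).smul_const _
  obtain ⟨W1, hW10, hW1⟩ := exists_weight_bound hR (hw.mul continuous_id)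
  obtain ⟨W2, hW20, hW2⟩ := exists_weight_bound hR (hw.mul hc)
  have hintF : ∫ z, F' p z ∂μ =
      planeTransform μ (fun z => w z * z) p • ContinuousLinearMap.fst ℂ ℂ ℂ +
        planeTransform μ (fun z => w z * conj z) p • ContinuousLinearMap.snd ℂ ℂ ℂ := by
    simp only [hF', planeTransform]
    rw [integral_add, integral_smul_const, integral_smul_const]
    · exact hi1
    · exact hi2
  rw [← hintF]
  refine hasFDerivAt_integral_of_dominated_of_fderiv_le (F' := F') (ball_mem_nhds p one_pos)
    (bound := fun _ => (W1 + W2) * Real.exp (|R| * (2 * (‖p‖ + 1))))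
    (Eventually.of_forall fun q => (integrable_plane hR hw q).aestronglyMeasurable)
    (integrable_plane hR hw p) ?_ ?_ (integrable_const _) ?_
  · exact hi1.aestronglyMeasurable.add hi2.aestronglyMeasurable
  · filter_upwards [hR, hW1, hW2] with z hz h1 h2 q hq
    have hqn : ‖q‖ ≤ ‖p‖ + 1 := by
      have := norm_sub_norm_le q p
      rw [mem_ball, dist_eq_norm] at hq
      linarith
    have hE : ‖exp (q.1 * z + q.2 * conj z)‖ ≤ Real.exp (|R| * (2 * (‖p‖ + 1))) := by
      refine (norm_exp_plane_le hz q).trans (Real.exp_le_exp.2 ?_)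
      refine mul_le_mul (le_abs_self R) ?_ (by positivity) (abs_nonneg _)
      linarith [norm_fst_le q, norm_snd_le q]
    refine (norm_add_le _ _).trans ?_
    rw [add_mul]
    refine add_le_add ?_ ?_
    · rw [norm_smul, norm_mul]
      calc _ ≤ (W1 * Real.exp (|R| * (2 * (‖p‖ + 1)))) * 1 :=
            mul_le_mul (mul_le_mul h1 hE (norm_nonneg _) hW10)
              (ContinuousLinearMap.norm_fst_le ℂ ℂ ℂ) (norm_nonneg _) (by positivity)
        _ = _ := mul_one _
    · rw [norm_smul, norm_mul]
      calc _ ≤ (W2 * Real.exp (|R| * (2 * (‖p‖ + 1)))) * 1 :=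
            mul_le_mul (mul_le_mul h2 hE (norm_nonneg _) hW20)
              (ContinuousLinearMap.norm_snd_le ℂ ℂ ℂ) (norm_nonneg _) (by positivity)
        _ = _ := mul_one _
  · refine Eventually.of_forall fun z q _ => ?_
    have h1 : HasFDerivAt (fun q : ℂ × ℂ => q.1 * z + q.2 * conj z)
        (z • ContinuousLinearMap.fst ℂ ℂ ℂ + conj z • ContinuousLinearMap.snd ℂ ℂ ℂ) q :=
      (hasFDerivAt_fst.mul_const z).add (hasFDerivAt_snd.mul_const (conj z))
    refine (h1.cexp.const_mul (w z)).congr_fderiv ?_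
    ext <;> simp [hF'] <;> ring

theorem differentiable_planeTransform (hR : ∀ᵐ z ∂μ, ‖z‖ ≤ R) {w : ℂ → ℂ} (hw : Continuous w) :
    Differentiable ℂ (planeTransform μ w) :=
  fun p => (hasFDerivAt_planeTransform hR hw p).differentiableAt

theorem planeTransform_one_ne_zero (hR : ∀ᵐ z ∂μ, ‖z‖ ≤ R) (hμ : μ ≠ 0) (u : ℂ) :
    planeTransform μ (fun _ => 1) (u, conj u) ≠ 0 := by
  have : NeZero μ := ⟨hμ⟩
  have he : ∀ z : ℂ, exp (u * z + conj u * conj z) = (Real.exp (2 * (u * z).re) : ℝ) := by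
    intro z
    rw [← map_mul, add_conj]; simp
  have hi := integrable_plane hR (continuous_const (y := (1 : ℂ))) (u, conj u)
  simp only [planeTransform, one_mul, he] at hi ⊢
  rw [integral_complex_ofReal]
  exact_mod_cast (integral_exp_pos (hi.re.congr
    (Eventually.of_forall fun z => Complex.ofReal_re _))).ne'

/-- Rotation invariance of the product of the transform at opposite frequencies extends to all
complex rotations, by the identity theorem in `l`. -/
theorem plane_scaling (hR : ∀ᵐ z ∂μ, ‖z‖ ≤ R)
    (hinv : ∀ l : ℂ, ‖l‖ = 1 → ∀ u v : ℂ,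
      planeTransform μ (fun _ => 1) (l * u, l⁻¹ * v) *
        planeTransform μ (fun _ => 1) (-(l * u), -(l⁻¹ * v)) =
      planeTransform μ (fun _ => 1) (u, v) * planeTransform μ (fun _ => 1) (-u, -v))
    (l : ℂ) (hl : l ≠ 0) (u v : ℂ) :
      planeTransform μ (fun _ => 1) (l * u, l⁻¹ * v) *
        planeTransform μ (fun _ => 1) (-(l * u), -(l⁻¹ * v)) =
      planeTransform μ (fun _ => 1) (u, v) * planeTransform μ (fun _ => 1) (-u, -v) := by
  have hΦ := differentiable_planeTransform hR (continuous_const (y := (1 : ℂ)))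
  have hd : DifferentiableOn ℂ (fun l : ℂ => planeTransform μ (fun _ => 1) (l * u, l⁻¹ * v) *
        planeTransform μ (fun _ => 1) (-(l * u), -(l⁻¹ * v))) {0}ᶜ := by
    intro x hx
    have hx' : x ≠ 0 := hx
    have h1 : DifferentiableAt ℂ (fun l : ℂ => (l * u, l⁻¹ * v)) x := by
      fun_prop (disch := assumption)
    have h2 : DifferentiableAt ℂ (fun l : ℂ => (-(l * u), -(l⁻¹ * v))) x := by
      fun_prop (disch := assumption)
    exact (((hΦ _).comp x h1).mul ((hΦ _).comp x h2)).differentiableWithinAt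
  have := (hd.analyticOnNhd isOpen_compl_singleton).eqOn_of_preconnected_of_frequently_eq
    (g := fun _ => planeTransform μ (fun _ => 1) (u, v) * planeTransform μ (fun _ => 1) (-u, -v))
    analyticOnNhd_const
    (isConnected_compl_singleton_of_one_lt_rank
      (by rw [Complex.rank_real_complex]; norm_num) 0).isPreconnected
    (z₀ := 1) (by simp) (frequently_norm_eq_one.mono fun w hw => hinv w hw u v)
  exact this (by simpa using hl)

/-- If the product of the transform at opposite frequencies is rotation invariant and the centroid
is at the origin, then the transform is even on the real frequencies `(r, r)`. Along each orbit `u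
* v = c` the transform has logarithmic derivative `a + b / l ^ 2`; the coefficient `a` is a
bounded holomorphic function of `c` that vanishes at `c = 0`, and on the orbits of real
frequencies `b` vanishes because the transform is real there. -/
theorem plane_even (hR : ∀ᵐ z ∂μ, ‖z‖ ≤ R) (hR0 : 0 ≤ R)
    (hinv : ∀ l : ℂ, ‖l‖ = 1 → ∀ u v : ℂ,
      planeTransform μ (fun _ => 1) (l * u, l⁻¹ * v) *
        planeTransform μ (fun _ => 1) (-(l * u), -(l⁻¹ * v)) =
      planeTransform μ (fun _ => 1) (u, v) * planeTransform μ (fun _ => 1) (-u, -v))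
    (hcent : ∫ z, z ∂μ = 0) {r : ℝ} (hr : 0 < r) :
    planeTransform μ (fun _ => 1) (r, r) = planeTransform μ (fun _ => 1) (-r, -r) := by
  rcases eq_or_ne μ 0 with hμ | hμ
  · simp [planeTransform, hμ]
  have hscale := plane_scaling hR hinv
  set Φ := planeTransform μ (fun _ => 1) with hΦdef
  set Φu := planeTransform μ (fun z => 1 * z) with hΦu
  set Φv := planeTransform μ (fun z => 1 * conj z) with hΦv
  have h1c : Continuous (fun _ : ℂ => (1 : ℂ)) := continuous_const
  have hd : Differentiable ℂ Φ := differentiable_planeTransform hR h1c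
  have hdu : Differentiable ℂ Φu := differentiable_planeTransform hR (h1c.mul continuous_id)
  have hdv : Differentiable ℂ Φv := differentiable_planeTransform hR (h1c.mul continuous_conj)
  set M := μ.real univ with hMdef
  have hM : 0 < M := by
    have : NeZero μ := ⟨hμ⟩
    exact measureReal_univ_pos
  have hbound : ∀ p : ℂ × ℂ, ‖Φ p‖ ≤ M * Real.exp (R * (‖p.1‖ + ‖p.2‖)) := by
    intro p
    refine (norm_integral_le_of_norm_le_const (C := Real.exp (R * (‖p.1‖ + ‖p.2‖))) ?_).trans
      (le_of_eq (mul_comm _ _))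
    filter_upwards [hR] with z hz
    simpa using norm_exp_plane_le hz p
  -- the value of the invariant product on the orbit `u * v = c`
  set h : ℂ → ℂ := fun c => Φ (1, c) * Φ (-1, -c) with hh
  have hprod : ∀ c l : ℂ, l ≠ 0 → Φ (l, l⁻¹ * c) * Φ (-l, (-l)⁻¹ * c) = h c := by
    intro c l hl
    have := hscale l hl 1 c
    simpa [inv_neg] using this
  have hΦne : ∀ c, h c ≠ 0 → ∀ l ≠ 0, Φ (l, l⁻¹ * c) ≠ 0 := fun c hc l hl hz =>
    hc (by rw [← hprod c l hl, hz, zero_mul])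
  -- `P c l` is `l` times the logarithmic derivative of `l ↦ Φ (l, l⁻¹ * c)`, as a formula that is
  -- visibly holomorphic in `c`
  set P : ℂ → ℂ → ℂ := fun c l =>
    (l * Φu (l, l⁻¹ * c) - l⁻¹ * c * Φv (l, l⁻¹ * c)) / Φ (l, l⁻¹ * c) with hP
  have hφ : ∀ c l : ℂ, l ≠ 0 → HasDerivAt (fun l => Φ (l, l⁻¹ * c))
      (Φu (l, l⁻¹ * c) + Φv (l, l⁻¹ * c) * (-(l ^ 2)⁻¹ * c)) l := by
    intro c l hl
    have hcurve : HasDerivAt (fun l : ℂ => (l, l⁻¹ * c)) (1, -(l ^ 2)⁻¹ * c) l :=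
      (hasDerivAt_id l).prodMk ((hasDerivAt_inv hl).mul_const c)
    have := (hasFDerivAt_planeTransform hR h1c (l, l⁻¹ * c)).comp_hasDerivAt l hcurve
    refine this.congr_deriv ?_
    simp [hΦu, hΦv]
  have hPd : ∀ c l : ℂ, l ≠ 0 →
      l * deriv (fun l => Φ (l, l⁻¹ * c)) l / Φ (l, l⁻¹ * c) = P c l := by
    intro c l hl
    rw [(hφ c l hl).deriv, hP]
    congr 1
    field_simp
    ring
  have hform : ∀ c, h c ≠ 0 → ∃ a b : ℂ, ‖a‖ ≤ 24 * R ∧ ∀ l ≠ 0, P c l = a * l + b / l := by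
    intro c hc
    obtain ⟨a, b, ha, hab⟩ := logDeriv_eq_of_mul_neg_eq (φ := fun l => Φ (l, l⁻¹ * c)) (h := h c)
      (M := M) (R := R) (S := ‖c‖)
      (fun l hl => (hφ c l hl).differentiableAt.differentiableWithinAt) hM hR0 (norm_nonneg c) hc
      (fun l _ => by simpa using hbound (l, l⁻¹ * c)) (fun l hl => hprod c l hl)
    exact ⟨a, b, ha, fun l hl => by rw [← hPd c l hl]; exact hab l hl⟩
  -- recovers the coefficient `a` from the values of `a * l + b / l` at `l = 1` and `l = 2`
  set A : ℂ → ℂ := fun c => (2 * P c 2 - P c 1) / 3 with hA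
  have hAeq : ∀ c a b : ℂ, (∀ l ≠ 0, P c l = a * l + b / l) → A c = a := by
    intro c a b hab
    simp only [hA]
    rw [hab 2 two_ne_zero, hab 1 one_ne_zero]
    ring
  -- by the invariance, `h 0 = Φ (l, 0) * Φ (-l, 0)` for all `l ≠ 0`; let `l` tend to `0`
  have hh0 : h 0 ≠ 0 := by
    have hcont : Continuous (fun l : ℂ => Φ (l, 0) * Φ (-l, 0)) := by
      have := hd.continuous
      fun_prop
    have h1 : Tendsto (fun l : ℂ => Φ (l, 0) * Φ (-l, 0)) (𝓝[≠] 0) (𝓝 (h 0)) := by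
      refine tendsto_const_nhds.congr' ?_
      filter_upwards [self_mem_nhdsWithin] with l hl
      simpa using (hprod 0 l hl).symm
    have h2 := tendsto_nhds_unique h1 ((hcont.tendsto 0).mono_left nhdsWithin_le_nhds)
    have h3 : Φ (0, 0) ≠ 0 := by simpa using planeTransform_one_ne_zero hR hμ 0
    rw [h2, neg_zero]
    exact mul_ne_zero h3 h3
  have hAdiff : ∀ c, h c ≠ 0 → DifferentiableAt ℂ A c := by
    intro c hc
    have hPdiff : ∀ l : ℂ, l ≠ 0 → DifferentiableAt ℂ (fun c => P c l) c := by
      intro l hl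
      have hcurve : DifferentiableAt ℂ (fun c : ℂ => (l, l⁻¹ * c)) c := by fun_prop
      have e := (hd (l, l⁻¹ * c)).comp c hcurve
      have eu := (hdu (l, l⁻¹ * c)).comp c hcurve
      have ev := (hdv (l, l⁻¹ * c)).comp c hcurve
      have hlc : DifferentiableAt ℂ (fun c : ℂ => l⁻¹ * c) c := by fun_prop
      exact ((eu.const_mul l).sub (hlc.mul ev)).div e (hΦne c hc l hl)
    exact (((hPdiff 2 two_ne_zero).const_mul 2).sub (hPdiff 1 one_ne_zero)).div_const 3
  have hhd : Differentiable ℂ h := by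
    have c1 : Differentiable ℂ (fun c : ℂ => ((1 : ℂ), c)) := by fun_prop
    have c2 : Differentiable ℂ (fun c : ℂ => ((-1 : ℂ), -c)) := by fun_prop
    exact (hd.comp c1).mul (hd.comp c2)
  have hAconst := eq_of_bounded_off_zeros (K := 24 * R) hhd hh0 hAdiff (by
    intro c hc
    obtain ⟨a, b, ha, hab⟩ := hform c hc
    rwa [hAeq c a b hab])
  have hΦu0 : Φu (0, 0) = 0 := by simp [hΦu, planeTransform, hcent]
  have hΦ0 : Φ (0, 0) ≠ 0 := by simpa using planeTransform_one_ne_zero hR hμ 0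
  -- on the orbit `c = 0` the logarithmic derivative at the origin is the centroid
  have hA0 : A 0 = 0 := by
    obtain ⟨a, b, -, hab⟩ := hform 0 hh0
    rw [hAeq 0 a b hab]
    have hcurve : Differentiable ℂ (fun l : ℂ => (l, (0 : ℂ))) := by fun_prop
    have hcont : ContinuousAt (fun l : ℂ => Φu (l, 0) / Φ (l, 0)) 0 :=
      (hdu.comp hcurve).continuous.continuousAt.div (hd.comp hcurve).continuous.continuousAt hΦ0
    have hlim : Tendsto (fun l : ℂ => Φu (l, 0) / Φ (l, 0)) (𝓝[≠] 0) (𝓝 0) := by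
      have := hcont.tendsto
      rw [hΦu0, zero_div] at this
      exact this.mono_left nhdsWithin_le_nhds
    have hid : Tendsto (fun l : ℂ => l ^ 2) (𝓝[≠] 0) (𝓝 0) := by
      have : Continuous (fun l : ℂ => l ^ 2) := by fun_prop
      have := this.tendsto 0
      simp only [ne_eq, OfNat.ofNat_ne_zero, not_false_eq_true, zero_pow] at this
      exact this.mono_left nhdsWithin_le_nhds
    have hrel : ∀ l : ℂ, l ≠ 0 → l ^ 2 * (Φu (l, 0) / Φ (l, 0)) = a * l ^ 2 + b := by
      intro l hl
      have := hab l hl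
      simp only [hP, mul_zero, zero_mul, sub_zero] at this
      rw [pow_two, mul_assoc, ← mul_div_assoc, this]
      field_simp
    have hb : b = 0 := by
      have h1 := hid.mul hlim
      have h2 := (hid.const_mul a).add_const b
      have h3 := tendsto_nhds_unique (h1.congr' (by
        filter_upwards [self_mem_nhdsWithin] with l hl using hrel l hl)) h2
      simpa using h3.symm
    have h4 : Tendsto (fun l : ℂ => Φu (l, 0) / Φ (l, 0)) (𝓝[≠] 0) (𝓝 a) := by
      refine tendsto_const_nhds.congr' ?_
      filter_upwards [self_mem_nhdsWithin] with l hl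
      have := hrel l hl
      rw [hb, add_zero, mul_comm] at this
      exact (mul_right_cancel₀ (pow_ne_zero 2 hl) this).symm
    exact tendsto_nhds_unique h4 hlim
  have hrc : (r : ℂ) ≠ 0 := by exact_mod_cast hr.ne'
  have hinvr : (r : ℂ)⁻¹ * (r : ℂ) ^ 2 = r := by field_simp
  have hinvnr : (-r : ℂ)⁻¹ * (r : ℂ) ^ 2 = -r := by field_simp
  -- the orbit through the real frequencies `(r, r)` and `(-r, -r)`
  have hhr : h ((r : ℂ) ^ 2) ≠ 0 := by
    rw [← hprod _ (r : ℂ) hrc, hinvr, hinvnr]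
    have e1 := planeTransform_one_ne_zero hR hμ (r : ℂ)
    have e2 := planeTransform_one_ne_zero hR hμ (-r : ℂ)
    simp only [map_neg, conj_ofReal] at e1 e2
    exact mul_ne_zero e1 e2
  obtain ⟨a, b, -, hab⟩ := hform _ hhr
  have ha : a = 0 := by rw [← hAeq _ a b hab, hAconst _ hhr, hA0]
  -- at real frequencies the transform is real, so its derivative in the angle
  -- is real, and `l * d/dl = -I * d/dθ`
  have himag : ∀ l : ℂ, l ≠ 0 → l⁻¹ * (r : ℂ) ^ 2 = conj l →
      conj (P ((r : ℂ) ^ 2) l) = -P ((r : ℂ) ^ 2) l := by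
    intro l hl hcl
    simp only [hP, hcl]
    have e1 : conj (Φ (l, conj l)) = Φ (l, conj l) := by
      simp [hΦdef, conj_planeTransform]
    have e2 : conj (Φu (l, conj l)) = Φv (l, conj l) := by
      simp [hΦu, hΦv, conj_planeTransform]
    have e3 : conj (Φv (l, conj l)) = Φu (l, conj l) := by
      simp [hΦu, hΦv, conj_planeTransform]
    simp only [map_div₀, map_sub, map_mul, e1, e2, e3, conj_conj]
    ring
  -- `b / r` and `b / (I * r)` are both purely imaginary
  have hb : b = 0 := by
    have e1 := himag r hrc (by rw [hinvr, conj_ofReal])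
    have e2 := himag (I * r) (mul_ne_zero I_ne_zero hrc) (by
      simp only [map_mul, conj_I, conj_ofReal, mul_inv, inv_I]
      field_simp)
    rw [hab _ hrc] at e1
    rw [hab _ (mul_ne_zero I_ne_zero hrc)] at e2
    simp only [ha, zero_mul, zero_add, map_div₀, map_mul, conj_I, conj_ofReal] at e1 e2
    have f1 : conj b = -b := by field_simp at e1; exact e1
    have f2 : conj b = b := by
      field_simp at e2
      exact neg_injective e2
    have : b = -b := by rw [← f1, f2]
    linear_combination this / 2
  have hder : ∀ l : ℂ, l ∈ ({0}ᶜ : Set ℂ) → deriv (fun l => Φ (l, l⁻¹ * (r : ℂ) ^ 2)) l = 0 := by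
    intro l hl
    have hl : l ≠ 0 := hl
    have := hPd ((r : ℂ) ^ 2) l hl
    rw [hab l hl, ha, hb, zero_mul, zero_div, zero_add, div_eq_zero_iff, mul_eq_zero] at this
    exact (this.resolve_right (hΦne _ hhr l hl)).resolve_left hl
  have := isOpen_compl_singleton.is_const_of_deriv_eq_zero
    (isConnected_compl_singleton_of_one_lt_rank
      (by rw [Complex.rank_real_complex]; norm_num) (0 : ℂ)).isPreconnected
    (f := fun l => Φ (l, l⁻¹ * (r : ℂ) ^ 2))
    (fun l hl => (hφ _ l hl).differentiableAt.differentiableWithinAt)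
    (fun l hl => hder l hl) (x := (r : ℂ)) (y := -(r : ℂ)) (by simpa using hrc) (by simpa using hrc)
  simpa only [hinvr, hinvnr] using this

end Plane

/-! ### The covariogram and the Laplace transform -/

section Geometry
open Complex Metric Set Filter Topology ComplexConjugate ENNReal
open scoped RealInnerProductSpace

variable {n : ℕ}

/-- The law of `x - y` for `x`, `y` independent with distribution Lebesgue measure on `E`, that
is, the convolution of Lebesgue measure on `E` with its reflection. Its density is the
covariogram. -/
noncomputable def diffMeasure (E : Set (EuclideanSpace ℝ (Fin n))) :
    Measure (EuclideanSpace ℝ (Fin n)) :=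
  ((volume.restrict E).prod (volume.restrict E)).map fun p => p.1 - p.2

theorem diffMeasure_eq_withDensity {E : Set (EuclideanSpace ℝ (Fin n))} (hE : MeasurableSet E) :
    diffMeasure E = volume.withDensity fun w => volume (E ∩ ((· + w) '' E)) := by
  have hmem : ∀ w, E ∩ ((· + w) '' E) = {x | x ∈ E ∧ x - w ∈ E} := by
    intro w; ext x; simp [image_add_right, sub_eq_add_neg]
  ext S hS
  have hsub : Measurable fun p : EuclideanSpace ℝ (Fin n) × EuclideanSpace ℝ (Fin n) =>
    p.1 - p.2 := by fun_prop
  rw [diffMeasure, Measure.map_apply hsub hS, Measure.prod_apply (hsub hS), withDensity_apply _ hS]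
  -- compute the measure of `T = {(x, w) | x ∈ E, x - w ∈ E, w ∈ S}` by slicing in both directions
  set T : Set (EuclideanSpace ℝ (Fin n) × EuclideanSpace ℝ (Fin n)) :=
    {p | p.1 ∈ E ∧ p.1 - p.2 ∈ E ∧ p.2 ∈ S} with hT
  have hTm : MeasurableSet T :=
    (measurable_fst hE).inter ((hsub hE).inter (measurable_snd hS))
  calc ∫⁻ x in E, volume.restrict E (Prod.mk x ⁻¹' ((fun p => p.1 - p.2) ⁻¹' S))
      = ∫⁻ x, volume {w | (x, w) ∈ T} := by
        rw [← lintegral_indicator hE]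
        refine lintegral_congr fun x => ?_
        by_cases hx : x ∈ E
        · rw [indicator_of_mem hx, Measure.restrict_apply (by
            exact measurable_prodMk_left (hsub hS))]
          have : {w | (x, w) ∈ T} = (fun w => x - w) ⁻¹'
              (Prod.mk x ⁻¹' ((fun p => p.1 - p.2) ⁻¹' S) ∩ E) := by
            ext w; simp [hT, hx, and_comm]
          rw [this, (Measure.measurePreserving_sub_left volume x).measure_preimage]
          exact ((measurable_prodMk_left (hsub hS)).inter hE).nullMeasurableSet
        · rw [indicator_of_notMem hx]
          simp [hT, hx]
    _ = (volume.prod volume) T := (Measure.prod_apply hTm).symm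
    _ = ∫⁻ w, volume {x | (x, w) ∈ T} := Measure.prod_apply_symm hTm
    _ = _ := by
        rw [← lintegral_indicator hS]
        refine lintegral_congr fun w => ?_
        by_cases hw : w ∈ S
        · rw [indicator_of_mem hw, hmem]
          simp [hT, hw]
        · rw [indicator_of_notMem hw]
          simp [hT, hw]

theorem measure_inter_eq_of_covariogram_eq {E F : Set (EuclideanSpace ℝ (Fin n))}
    (hE : IsCompact E) (hF : IsCompact F) {x y : EuclideanSpace ℝ (Fin n)}
    (h : covariogram E x = covariogram F y) :
    volume (E ∩ ((· + x) '' E)) = volume (F ∩ ((· + y) '' F)) :=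
  (ENNReal.toReal_eq_toReal_iff'
    ((measure_mono inter_subset_left).trans_lt hE.measure_lt_top).ne
    ((measure_mono inter_subset_left).trans_lt hF.measure_lt_top).ne).1 h

theorem diffMeasure_eq_of_covariogram_eq {E F : Set (EuclideanSpace ℝ (Fin n))}
    (hE : IsCompact E) (hF : IsCompact F) (h : ∀ x, covariogram E x = covariogram F x) :
    diffMeasure E = diffMeasure F := by
  rw [diffMeasure_eq_withDensity hE.measurableSet, diffMeasure_eq_withDensity hF.measurableSet]
  congr 1
  funext w
  exact measure_inter_eq_of_covariogram_eq hE hF (h w)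

/-- A radial covariogram makes the difference measure invariant under linear isometries. -/
theorem map_diffMeasure {E : Set (EuclideanSpace ℝ (Fin n))} (hE : IsCompact E)
    (hrad : ∀ x y : EuclideanSpace ℝ (Fin n), ‖x‖ = ‖y‖ → covariogram E x = covariogram E y)
    (ρ : EuclideanSpace ℝ (Fin n) ≃ₗᵢ[ℝ] EuclideanSpace ℝ (Fin n)) :
    (diffMeasure E).map ρ = diffMeasure E := by
  have hρ : Measurable ρ := ρ.continuous.measurable
  ext S hS
  rw [Measure.map_apply hρ hS, diffMeasure_eq_withDensity hE.measurableSet,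
    withDensity_apply _ hS, withDensity_apply _ (hρ hS)]
  refine Eq.trans ?_ (ρ.measurePreserving.setLIntegral_comp_preimage_emb
    ρ.toHomeomorph.measurableEmbedding _ S)
  refine lintegral_congr fun w => ?_
  exact measure_inter_eq_of_covariogram_eq hE hE (hrad _ _ (ρ.norm_map w).symm)

/-- A function that splits along differences, such as an exponential, has a product integral
against the difference measure. -/
theorem integral_diffMeasure_mul {L : Type*} [RCLike L] (E : Set (EuclideanSpace ℝ (Fin n)))
    (f g k : EuclideanSpace ℝ (Fin n) → L) (hf : Continuous f)
    (h : ∀ x y, f (x - y) = g x * k y) :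
    ∫ w, f w ∂(diffMeasure E) = (∫ x in E, g x) * ∫ y in E, k y := by
  rw [diffMeasure, integral_map (by fun_prop) hf.aestronglyMeasurable]
  simp only [h]
  exact integral_prod_mul g k

/-- The two-sided Laplace transform `ξ ↦ ∫ exp ⟪ξ, x⟫` of Lebesgue measure on `E`, at real
frequencies. -/
noncomputable def laplaceTransform (E : Set (EuclideanSpace ℝ (Fin n)))
    (ξ : EuclideanSpace ℝ (Fin n)) : ℝ :=
  ∫ x in E, Real.exp ⟪ξ, x⟫

theorem laplaceTransform_mul_neg (E : Set (EuclideanSpace ℝ (Fin n)))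
    (ξ : EuclideanSpace ℝ (Fin n)) :
    laplaceTransform E ξ * laplaceTransform E (-ξ) = ∫ w, Real.exp ⟪ξ, w⟫ ∂(diffMeasure E) := by
  refine (integral_diffMeasure_mul E _ _ _ (by fun_prop) fun x y => ?_).symm
  rw [← Real.exp_add, inner_sub_right, inner_neg_left, sub_eq_add_neg]

/-- The Laplace transform on real frequencies determines the measure: by analytic continuation it
determines the characteristic function. -/
theorem restrict_eq_of_laplaceTransform_eq {E F : Set (EuclideanSpace ℝ (Fin n))}
    (hE : IsCompact E) (hF : IsCompact F)
    (h : ∀ ξ, laplaceTransform E ξ = laplaceTransform F ξ) :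
    (volume : Measure (EuclideanSpace ℝ (Fin n))).restrict E = volume.restrict F := by
  have : IsFiniteMeasure ((volume : Measure (EuclideanSpace ℝ (Fin n))).restrict E) :=
    ⟨by simpa using hE.measure_lt_top⟩
  have : IsFiniteMeasure ((volume : Measure (EuclideanSpace ℝ (Fin n))).restrict F) :=
    ⟨by simpa using hF.measure_lt_top⟩
  refine Measure.ext_of_charFun (funext fun ξ => ?_)
  have hmgf : ∀ G : Set (EuclideanSpace ℝ (Fin n)), ∀ t : ℝ,
      ProbabilityTheory.mgf (fun x => ⟪ξ, x⟫) (volume.restrict G) t =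
        laplaceTransform G (t • ξ) := by
    intro G t
    simp only [ProbabilityTheory.mgf, laplaceTransform, real_inner_smul_left]
  have hzero : (volume : Measure (EuclideanSpace ℝ (Fin n))).restrict E = 0 ↔
      (volume : Measure (EuclideanSpace ℝ (Fin n))).restrict F = 0 := by
    have h0 := h 0
    simp only [laplaceTransform, inner_zero_left, Real.exp_zero, integral_const, smul_eq_mul,
      mul_one] at h0
    rw [← Measure.measure_univ_eq_zero, ← measureReal_eq_zero_iff, h0,
      measureReal_eq_zero_iff, Measure.measure_univ_eq_zero]
  have hset : ∀ G : Set (EuclideanSpace ℝ (Fin n)), IsCompact G →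
      ProbabilityTheory.integrableExpSet (fun x => ⟪ξ, x⟫) (volume.restrict G) = univ := by
    intro G hG
    refine eq_univ_of_forall fun t => ?_
    exact (Continuous.continuousOn (by fun_prop)).integrableOn_compact hG
  have key := ProbabilityTheory.eqOn_complexMGF_of_mgf' (X := fun x => ⟪ξ, x⟫)
    (Y := fun x => ⟪ξ, x⟫)
    (funext fun t => by rw [hmgf E, hmgf F, h]) hzero
  have := key (x := I) (by simp [hset E hE])
  simp only [ProbabilityTheory.complexMGF] at this
  simp only [charFun_apply, real_inner_comm, mul_comm _ I] at this ⊢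
  exact this

/-- Regularity enters here: `interior E \ F` is an open null set. -/
theorem subset_of_restrict_eq {E F : Set (EuclideanSpace ℝ (Fin n))}
    (hE : E = closure (interior E)) (hF : IsClosed F)
    (h : (volume : Measure (EuclideanSpace ℝ (Fin n))).restrict E = volume.restrict F) :
    E ⊆ F := by
  have hopen : IsOpen (interior E \ F) := isOpen_interior.sdiff hF
  have h1 : volume (interior E \ F) = 0 := by
    have e1 : volume.restrict E (interior E \ F) = volume (interior E \ F) :=
      Measure.restrict_eq_self _ (sdiff_subset.trans interior_subset)
    rw [← e1, h, Measure.restrict_apply hopen.measurableSet]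
    simp
  rw [hE]
  exact closure_minimal (sdiff_eq_empty.1 (hopen.measure_eq_zero_iff volume |>.1 h1)) hF

end Geometry

/-! ### Reduction to the plane and uniqueness of centred sets -/

section Main
open Complex Metric Set Filter Topology ComplexConjugate ENNReal
open scoped RealInnerProductSpace

variable {n : ℕ}

/-- The coordinate `⟪e, x⟫ + ⟪f, x⟫ * I` of the projection of `x` to the oriented plane spanned by
an orthonormal pair `e`, `f`, identified with `ℂ`. -/
noncomputable def planeCoord (e f : EuclideanSpace ℝ (Fin n)) : EuclideanSpace ℝ (Fin n) →L[ℝ] ℂ :=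
  Complex.ofRealCLM.comp (innerSL ℝ e) +
    (Complex.I • Complex.ofRealCLM.comp (innerSL ℝ f))

theorem planeCoord_apply (e f x : EuclideanSpace ℝ (Fin n)) :
    planeCoord e f x = (⟪e, x⟫ : ℝ) + (⟪f, x⟫ : ℝ) * I := by
  simp [planeCoord, mul_comm]

/-- For unit `s`, the reflection in the hyperplane orthogonal to `s.re • e + s.im • f` acts on the
plane of `e`, `f` as `y ↦ -s ^ 2 * conj y`. -/
theorem planeCoord_reflection {e f : EuclideanSpace ℝ (Fin n)} (he : ‖e‖ = 1) (hf : ‖f‖ = 1)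
    (hef : ⟪e, f⟫ = 0) {s : ℂ} (hs : ‖s‖ = 1) :
    ∃ ρ : EuclideanSpace ℝ (Fin n) ≃ₗᵢ[ℝ] EuclideanSpace ℝ (Fin n),
      ∀ x, planeCoord e f (ρ x) = -(s ^ 2 * conj (planeCoord e f x)) := by
  set w := s.re • e + s.im • f with hw
  have hs2 : s.re ^ 2 + s.im ^ 2 = 1 := by
    have := Complex.sq_norm s
    rw [hs, normSq_apply] at this
    linarith
  have hee : ⟪e, e⟫ = (1 : ℝ) := by rw [real_inner_self_eq_norm_sq, he]; norm_num
  have hff : ⟪f, f⟫ = (1 : ℝ) := by rw [real_inner_self_eq_norm_sq, hf]; norm_num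
  have hfe : ⟪f, e⟫ = (0 : ℝ) := by rw [real_inner_comm, hef]
  have hwn : ‖w‖ = 1 := by
    have : ‖w‖ ^ 2 = 1 := by
      rw [← real_inner_self_eq_norm_sq, hw]
      simp only [inner_add_left, inner_add_right, real_inner_smul_left, real_inner_smul_right,
        hee, hff, hef, hfe]
      linarith
    nlinarith [norm_nonneg w]
  refine ⟨(ℝ ∙ w)ᗮ.reflection, fun x => ?_⟩
  have hρ : (ℝ ∙ w)ᗮ.reflection x = x - (2 * ⟪w, x⟫) • w := by
    rw [Submodule.reflection_orthogonal_apply, Submodule.reflection_singleton_apply, hwn]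
    simp [two_smul, add_smul, two_mul]
  rw [hρ]
  have hwx : ⟪w, x⟫ = s.re * ⟪e, x⟫ + s.im * ⟪f, x⟫ := by
    rw [hw]; simp only [inner_add_left, real_inner_smul_left]
  have h1 : ⟪e, w⟫ = s.re := by
    rw [hw]; simp only [inner_add_right, real_inner_smul_right, hee, hef]; ring
  have h2 : ⟪f, w⟫ = s.im := by
    rw [hw]; simp only [inner_add_right, real_inner_smul_right, hff, hfe]; ring
  simp only [planeCoord_apply, inner_sub_right, real_inner_smul_right, hwx, h1, h2]
  apply Complex.ext
  · simp [pow_two]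
    linear_combination (-⟪e, x⟫) * hs2
  · simp [pow_two]
    linear_combination (-⟪f, x⟫) * hs2

/-- The Laplace transform of a centred set with radial covariogram is even. For each `ξ` the claim
concerns only the projection of the set to a plane through `ξ`. -/
theorem laplaceTransform_even (hn : 2 ≤ n) {E : Set (EuclideanSpace ℝ (Fin n))} (hE : IsCompact E)
    (hrad : ∀ x y : EuclideanSpace ℝ (Fin n), ‖x‖ = ‖y‖ → covariogram E x = covariogram E y)
    (hcent : ∫ x in E, x = 0) (ξ : EuclideanSpace ℝ (Fin n)) :
    laplaceTransform E ξ = laplaceTransform E (-ξ) := by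
  rcases eq_or_ne ξ 0 with rfl | hξ
  · simp
  have hr : 0 < ‖ξ‖ := norm_pos_iff.2 hξ
  set e : EuclideanSpace ℝ (Fin n) := ‖ξ‖⁻¹ • ξ with he_def
  have he : ‖e‖ = 1 := by
    rw [he_def, norm_smul, norm_inv, norm_norm, inv_mul_cancel₀ hr.ne']
  have hξe : ξ = ‖ξ‖ • e := by rw [he_def, smul_inv_smul₀ hr.ne']
  obtain ⟨f, hf, hef⟩ : ∃ f : EuclideanSpace ℝ (Fin n), ‖f‖ = 1 ∧ ⟪e, f⟫ = (0 : ℝ) := by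
    -- since `2 ≤ n`, some direction is orthogonal to `e`
    have hne : (ℝ ∙ e)ᗮ ≠ ⊥ := by
      intro h
      have h1 := Submodule.finrank_add_finrank_orthogonal (ℝ ∙ e)
      rw [h, finrank_bot, finrank_euclideanSpace_fin] at h1
      have h2 := finrank_span_singleton (K := ℝ) (v := e) (by
        intro h0; rw [h0, norm_zero] at he; norm_num at he)
      omega
    obtain ⟨g, hg, hg0⟩ := Submodule.exists_mem_ne_zero_of_ne_bot hne
    refine ⟨‖g‖⁻¹ • g, ?_, ?_⟩
    · rw [norm_smul, norm_inv, norm_norm, inv_mul_cancel₀ (norm_ne_zero_iff.2 hg0)]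
    · rw [real_inner_smul_right, Submodule.mem_orthogonal_singleton_iff_inner_right.1 hg, mul_zero]
  set z := planeCoord e f with hz
  have hzm : Measurable z := z.continuous.measurable
  have hfin : IsFiniteMeasure ((volume : Measure (EuclideanSpace ℝ (Fin n))).restrict E) :=
    ⟨by simpa using hE.measure_lt_top⟩
  set μ : Measure ℂ := (volume.restrict E).map z with hμ
  have htrans : ∀ u v : ℂ, planeTransform μ (fun _ => 1) (u, v) =
      ∫ x in E, exp (u * z x + v * conj (z x)) := by
    intro u v
    rw [planeTransform, hμ, integral_map hzm.aemeasurable (by fun_prop)]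
    simp
  have hprod : ∀ u v : ℂ, planeTransform μ (fun _ => 1) (u, v) *
      planeTransform μ (fun _ => 1) (-u, -v) =
        ∫ w, exp (u * z w + v * conj (z w)) ∂(diffMeasure E) := by
    intro u v
    rw [htrans, htrans]
    refine (integral_diffMeasure_mul E _ _ _ (by fun_prop) fun x y => ?_).symm
    rw [← Complex.exp_add, map_sub, map_sub]
    ring_nf
  have hrefl : ∀ s : ℂ, ‖s‖ = 1 → ∀ u v : ℂ,
      (∫ w, exp (u * z w + v * conj (z w)) ∂(diffMeasure E)) =
      ∫ w, exp (-(v * conj (s ^ 2)) * z w + -(u * s ^ 2) * conj (z w)) ∂(diffMeasure E) := by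
    intro s hs u v
    obtain ⟨ρ, hρ⟩ := planeCoord_reflection he hf hef hs
    conv_lhs => rw [← map_diffMeasure hE hrad ρ]
    rw [integral_map ρ.continuous.measurable.aemeasurable
      (Continuous.aestronglyMeasurable (by fun_prop))]
    refine integral_congr_ae (Eventually.of_forall fun w => ?_)
    simp only [hz, hρ w, map_neg, map_mul, conj_conj]
    ring_nf
  -- a rotation is a product of two reflections
  have hinv : ∀ l : ℂ, ‖l‖ = 1 → ∀ u v : ℂ,
      planeTransform μ (fun _ => 1) (l * u, l⁻¹ * v) *
        planeTransform μ (fun _ => 1) (-(l * u), -(l⁻¹ * v)) =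
      planeTransform μ (fun _ => 1) (u, v) * planeTransform μ (fun _ => 1) (-u, -v) := by
    intro l hl u v
    obtain ⟨s, hs⟩ := IsAlgClosed.exists_pow_nat_eq l (n := 2) (by norm_num)
    have hsn : ‖s‖ = 1 := by
      have : ‖s‖ ^ 2 = 1 := by rw [← norm_pow, hs, hl]
      nlinarith [norm_nonneg s]
    have hinvl : conj l = l⁻¹ := by
      rw [Complex.inv_def, normSq_eq_norm_sq, hl]; simp
    have hl0 : l ≠ 0 := by intro h; rw [h, norm_zero] at hl; norm_num at hl
    rw [hprod, hprod, hrefl 1 (by simp) (l * u) (l⁻¹ * v), hrefl s hsn u v, hs, hinvl]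
    simp [mul_comm]
  obtain ⟨R, hR⟩ := (hE.image z.continuous).isBounded.exists_norm_le
  have hbound : ∀ᵐ y ∂μ, ‖y‖ ≤ max R 0 := by
    rw [hμ, ae_map_iff hzm.aemeasurable (measurableSet_le (by fun_prop) (by fun_prop))]
    refine (ae_restrict_iff' hE.measurableSet).2 (Eventually.of_forall fun x hx => ?_)
    exact (hR _ (mem_image_of_mem z hx)).trans (le_max_left _ _)
  have hcent' : ∫ y, y ∂μ = 0 := by
    rw [hμ, integral_map hzm.aemeasurable (by fun_prop),
      z.integral_comp_comm (φ := fun x => x)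
        (continuous_id.continuousOn.integrableOn_compact hE), hcent, map_zero]
  have hfinal := plane_even hbound (le_max_right R 0) hinv hcent' (half_pos hr)
  have hval : ∀ t : ℝ, planeTransform μ (fun _ => 1) ((t : ℂ), (t : ℂ)) =
      (laplaceTransform E ((2 * t) • e) : ℝ) := by
    intro t
    rw [htrans, laplaceTransform, ← integral_complex_ofReal]
    refine integral_congr_ae (Eventually.of_forall fun x => ?_)
    simp only [hz, planeCoord_apply, map_add, map_mul, conj_ofReal, conj_I,
      real_inner_smul_left, ofReal_exp]
    push_cast
    ring_nf
  have h2 : (-((‖ξ‖ / 2 : ℝ) : ℂ)) = ((-(‖ξ‖ / 2) : ℝ) : ℂ) := by push_cast; ring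
  rw [h2, hval, hval] at hfinal
  have h3 := Complex.ofReal_injective hfinal
  rw [show 2 * (‖ξ‖ / 2) = ‖ξ‖ by ring, show 2 * (-(‖ξ‖ / 2)) = -‖ξ‖ by ring, neg_smul,
    ← hξe] at h3
  exact h3

/-- A centred regular compact set with radial covariogram is determined by its covariogram, with
no ambiguity left: its Laplace transform is nonnegative, and its square is the transform of the
covariogram. -/
theorem eq_of_covariogram_eq (hn : 2 ≤ n) {E F : Set (EuclideanSpace ℝ (Fin n))}
    (hE : IsCompact E) (hF : IsCompact F)
    (hEreg : E = closure (interior E)) (hFreg : F = closure (interior F))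
    (hrad : ∀ x y : EuclideanSpace ℝ (Fin n), ‖x‖ = ‖y‖ → covariogram E x = covariogram E y)
    (hEF : ∀ x, covariogram F x = covariogram E x)
    (hEcent : ∫ x in E, x = 0) (hFcent : ∫ x in F, x = 0) : F = E := by
  have hFrad : ∀ x y : EuclideanSpace ℝ (Fin n),
      ‖x‖ = ‖y‖ → covariogram F x = covariogram F y := by
    intro x y hxy
    rw [hEF, hEF, hrad x y hxy]
  have hnonneg : ∀ (G : Set (EuclideanSpace ℝ (Fin n))) ξ, 0 ≤ laplaceTransform G ξ :=
    fun G ξ => integral_nonneg fun x => (Real.exp_pos _).le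
  have hL : ∀ ξ, laplaceTransform F ξ = laplaceTransform E ξ := by
    intro ξ
    have h1 := laplaceTransform_mul_neg E ξ
    have h2 := laplaceTransform_mul_neg F ξ
    rw [diffMeasure_eq_of_covariogram_eq hF hE hEF, ← h1,
      ← laplaceTransform_even hn hE hrad hEcent, ← laplaceTransform_even hn hF hFrad hFcent] at h2
    exact (mul_self_inj (hnonneg F ξ) (hnonneg E ξ)).1 h2
  have hres := restrict_eq_of_laplaceTransform_eq hF hE hL
  exact (subset_of_restrict_eq hFreg hE.isClosed hres).antisymm
    (subset_of_restrict_eq hEreg hF.isClosed hres.symm)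

theorem covariogram_image_sub (E : Set (EuclideanSpace ℝ (Fin n)))
    (a x : EuclideanSpace ℝ (Fin n)) :
    covariogram ((fun y => y - a) '' E) x = covariogram E x := by
  have : (fun y => y - a) '' E ∩ (· + x) '' ((fun y => y - a) '' E) =
      (· + -a) '' (E ∩ (· + x) '' E) := by
    rw [image_inter (add_left_injective _), image_image, image_image]
    simp only [sub_eq_add_neg, add_right_comm]
  rw [covariogram, this, image_add_right, measure_preimage_add_right, covariogram]

theorem covariogram_image_isometry (ρ : EuclideanSpace ℝ (Fin n) ≃ₗᵢ[ℝ] EuclideanSpace ℝ (Fin n))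
    (E : Set (EuclideanSpace ℝ (Fin n))) (x : EuclideanSpace ℝ (Fin n)) :
    covariogram (ρ '' E) x = covariogram E (ρ.symm x) := by
  have : ρ '' E ∩ (· + x) '' (ρ '' E) = ρ.symm ⁻¹' (E ∩ (· + ρ.symm x) '' E) := by
    rw [← ρ.image_eq_preimage_symm, image_inter ρ.injective, image_image, image_image]
    simp
  rw [covariogram, this, ρ.symm.measurePreserving.measure_preimage_emb
    ρ.symm.toHomeomorph.measurableEmbedding, covariogram]

theorem regular_image {E : Set (EuclideanSpace ℝ (Fin n))} (hE : E = closure (interior E))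
    (φ : EuclideanSpace ℝ (Fin n) ≃ₜ EuclideanSpace ℝ (Fin n)) :
    φ '' E = closure (interior (φ '' E)) := by
  rw [← φ.image_interior, ← φ.image_closure, ← hE]

theorem exists_centroid {E : Set (EuclideanSpace ℝ (Fin n))} (hE : IsCompact E)
    (h0 : volume E ≠ 0) : ∃ a : EuclideanSpace ℝ (Fin n),
      ∫ x in (fun y => y - a) '' E, x = 0 := by
  have hfin : IsFiniteMeasure ((volume : Measure (EuclideanSpace ℝ (Fin n))).restrict E) :=
    ⟨by simpa using hE.measure_lt_top⟩
  have hpos : volume.real E ≠ 0 := by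
    rw [measureReal_ne_zero_iff hE.measure_lt_top.ne]
    exact h0
  refine ⟨(volume.real E)⁻¹ • ∫ x in E, x, ?_⟩
  set a := (volume.real E)⁻¹ • ∫ x in E, x with ha
  rw [(measurePreserving_sub_right volume a).setIntegral_image_emb
    (Homeomorph.subRight a).measurableEmbedding (fun x => x) E,
    integral_sub (f := fun x => x)
      (continuous_id.continuousOn.integrableOn_compact hE) (integrable_const a),
    setIntegral_const, ha, smul_inv_smul₀ hpos, sub_self]

theorem integral_image_isometry (ρ : EuclideanSpace ℝ (Fin n) ≃ₗᵢ[ℝ] EuclideanSpace ℝ (Fin n))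
    {E : Set (EuclideanSpace ℝ (Fin n))} (hcent : ∫ x in E, x = 0) :
    ∫ x in ρ '' E, x = 0 := by
  rw [ρ.measurePreserving.setIntegral_image_emb ρ.toHomeomorph.measurableEmbedding
    (fun x => x) E]
  have := ρ.toContinuousLinearEquiv.integral_comp_comm (μ := volume.restrict E) (fun x => x)
  simp only [LinearIsometryEquiv.coe_toContinuousLinearEquiv] at this
  rw [this, hcent, map_zero]

end Main

/-- Lawton's theorem: if `n ≥ 2` and `E ⊂ ℝⁿ` is a nonempty regular compact set whose
covariogram is radially symmetric, then a translate of `E` is invariant under every linear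
isometry of `ℝⁿ`, and `E` is determined by its covariogram within the class of regular
compact sets, up to translations and reflections. -/
theorem radially_symmetric_covariogram {n : ℕ} (hn : 2 ≤ n)
    (E : Set (EuclideanSpace ℝ (Fin n))) (hEc : IsCompact E)
    (hEreg : E = closure (interior E)) (hEne : E.Nonempty)
    (hrad : ∀ x y : EuclideanSpace ℝ (Fin n), ‖x‖ = ‖y‖ → covariogram E x = covariogram E y) :
    (∃ x₀ : EuclideanSpace ℝ (Fin n),
        ∀ ρ : EuclideanSpace ℝ (Fin n) ≃ₗᵢ[ℝ] EuclideanSpace ℝ (Fin n),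
          ρ '' ((fun y => y - x₀) '' E) = (fun y => y - x₀) '' E) ∧
    (∀ F : Set (EuclideanSpace ℝ (Fin n)), IsCompact F → F = closure (interior F) →
        (∀ x, covariogram F x = covariogram E x) →
        ∃ x : EuclideanSpace ℝ (Fin n),
          F = (fun y => y + x) '' E ∨ F = (fun y => y + x) '' (-E)) := by
  have hvol : volume E ≠ 0 := by
    have hintF : (interior E).Nonempty := by
      rw [← closure_nonempty_iff, ← hEreg]
      exact hEne
    exact ((isOpen_interior.measure_pos volume hintF).trans_le (measure_mono interior_subset)).ne'
  obtain ⟨a, ha⟩ := exists_centroid hEc hvol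
  have hcomp : ∀ {G : Set (EuclideanSpace ℝ (Fin n))} (b : EuclideanSpace ℝ (Fin n)),
      IsCompact G → IsCompact ((fun y => y - b) '' G) :=
    fun b hG => hG.image (by fun_prop)
  have hE₀rad : ∀ x y : EuclideanSpace ℝ (Fin n), ‖x‖ = ‖y‖ →
      covariogram ((fun y => y - a) '' E) x = covariogram ((fun y => y - a) '' E) y := by
    simpa only [covariogram_image_sub] using hrad
  have hE₀reg := regular_image hEreg (Homeomorph.subRight a)
  refine ⟨⟨a, fun ρ => ?_⟩, fun F hFc hFreg hF => ?_⟩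
  · refine eq_of_covariogram_eq hn (hcomp a hEc) ((hcomp a hEc).image ρ.continuous) hE₀reg
      (regular_image hE₀reg ρ.toHomeomorph) hE₀rad (fun x => ?_) ha (integral_image_isometry ρ ha)
    rw [covariogram_image_isometry]
    exact hE₀rad _ _ (ρ.symm.norm_map x)
  · have hFvol : volume F ≠ 0 := by
      have h := measure_inter_eq_of_covariogram_eq hFc hEc (hF 0)
      simp only [add_zero, Set.image_id', Set.inter_self] at h
      rwa [h]
    obtain ⟨b, hb⟩ := exists_centroid hFc hFvol
    have key : (fun y => y - b) '' F = (fun y => y - a) '' E := by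
      refine eq_of_covariogram_eq hn (hcomp a hEc) (hcomp b hFc) hE₀reg
        (regular_image hFreg (Homeomorph.subRight b)) hE₀rad (fun x => ?_) ha hb
      rw [covariogram_image_sub, covariogram_image_sub, hF]
    refine ⟨b - a, Or.inl ?_⟩
    have h := congrArg (fun S => (fun y => y + b) '' S) key
    simp only [Set.image_image, sub_add_cancel, Set.image_id'] at h
    rw [h]
    refine Set.image_congr fun y _ => ?_
    abel
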